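/- Let ρ ∈ K_2 with v_2(ρ) = b_2. Then Ψ_1^p·ρ ≡ (σ_1^p − 1)·ρ ≡ Ψ_2·ρ mod 𝔐_2^{p^2·e_0 + p·b_1 − (p−1)·b_2}. Consequently, for all 0 ≤ r ≤ p−1 and 0 ≤ s ≤ p−1, Ψ_1^{p+r}·Ψ_2^s·ρ ≡ Ψ_1^r·Ψ_2^{s+1}·ρ mod 𝔐_2^{p^2·e_0 + (r+1)·p·b_1 − (p−1−s)·b_2}. -/

import Mathlib

/-- A normalized discrete valuation on a field `K`, recorded as a function
`v : K → ℤ`.  The value of `v` at `0` is irrelevant: all conditions below only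
refer to nonzero elements (the convention `v 0 = ∞` being understood). -/
structure IsDiscVal {K : Type*} [Field K] (v : K → ℤ) : Prop where
  map_one : v 1 = 0
  map_mul : ∀ x y : K, x ≠ 0 → y ≠ 0 → v (x * y) = v x + v y
  min_le_add : ∀ x y : K, x ≠ 0 → y ≠ 0 → x + y ≠ 0 → min (v x) (v y) ≤ v (x + y)
  exists_uniformizer : ∃ π : K, π ≠ 0 ∧ v π = 1

/-- `x` lies in the `N`-th power of the maximal ideal of the valuation `v`. -/
def MemPow {K : Type*} [Field K] (v : K → ℤ) (N : ℤ) (x : K) : Prop := x = 0 ∨ N ≤ v x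

theorem MemPow.mono {K : Type*} [Field K] {v : K → ℤ} {M N : ℤ} {x : K}
    (h : MemPow v N x) (hMN : M ≤ N) : MemPow v M x :=
  h.imp_right hMN.trans

theorem MemPow.le {K : Type*} [Field K] {v : K → ℤ} {N : ℤ} {x : K}
    (h : MemPow v N x) (hx : x ≠ 0) : N ≤ v x :=
  h.resolve_left hx

namespace IsDiscVal

variable {K : Type*} [Field K] {v : K → ℤ}

theorem map_neg_one (hv : IsDiscVal v) : v (-1) = 0 := by
  have h := hv.map_mul (-1) (-1) (by simp) (by simp)
  rw [neg_mul_neg, one_mul, hv.map_one] at h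
  omega

theorem map_neg (hv : IsDiscVal v) {x : K} (hx : x ≠ 0) : v (-x) = v x := by
  rw [← neg_one_mul, hv.map_mul _ _ (by simp) hx, hv.map_neg_one, zero_add]

theorem map_pow (hv : IsDiscVal v) {x : K} (hx : x ≠ 0) (n : ℕ) : v (x ^ n) = n * v x := by
  induction n with
  | zero => simp [hv.map_one]
  | succ n ih =>
    rw [pow_succ, hv.map_mul _ _ (pow_ne_zero _ hx) hx, ih]
    push_cast; ring

theorem memPow_neg (hv : IsDiscVal v) {N : ℤ} {x : K} (hx : MemPow v N x) :
    MemPow v N (-x) := by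
  rcases eq_or_ne x 0 with rfl | h0
  · exact Or.inl neg_zero
  · exact Or.inr ((hv.map_neg h0).symm ▸ hx.le h0)

theorem memPow_add (hv : IsDiscVal v) {N : ℤ} {x y : K} (hx : MemPow v N x)
    (hy : MemPow v N y) : MemPow v N (x + y) := by
  by_cases hxy : x + y = 0
  · exact Or.inl hxy
  rcases eq_or_ne x 0 with rfl | hx0
  · rwa [zero_add]
  rcases eq_or_ne y 0 with rfl | hy0
  · rwa [add_zero]
  exact Or.inr ((le_min (hx.le hx0) (hy.le hy0)).trans (hv.min_le_add x y hx0 hy0 hxy))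

theorem memPow_sub (hv : IsDiscVal v) {N : ℤ} {x y : K} (hx : MemPow v N x)
    (hy : MemPow v N y) : MemPow v N (x - y) := by
  rw [sub_eq_add_neg]
  exact hv.memPow_add hx (hv.memPow_neg hy)

theorem memPow_sum (hv : IsDiscVal v) {ι : Type*} {N : ℤ} (s : Finset ι) {f : ι → K}
    (hf : ∀ i ∈ s, MemPow v N (f i)) : MemPow v N (∑ i ∈ s, f i) :=
  Finset.sum_induction f (MemPow v N) (fun _ _ => hv.memPow_add) (Or.inl rfl) hf

theorem memPow_mul (hv : IsDiscVal v) {M N : ℤ} {x y : K} (hx : MemPow v M x)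
    (hy : MemPow v N y) : MemPow v (M + N) (x * y) := by
  rcases eq_or_ne x 0 with rfl | hx0
  · exact Or.inl (zero_mul y)
  rcases eq_or_ne y 0 with rfl | hy0
  · exact Or.inl (mul_zero x)
  refine Or.inr ?_
  rw [hv.map_mul _ _ hx0 hy0]
  exact add_le_add (hx.le hx0) (hy.le hy0)

theorem memPow_one (hv : IsDiscVal v) : MemPow v 0 1 := Or.inr hv.map_one.ge

theorem memPow_pow (hv : IsDiscVal v) {N : ℤ} {x : K} (hx : MemPow v N x) (n : ℕ) :
    MemPow v (n * N) (x ^ n) := by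
  induction n with
  | zero => simpa using hv.memPow_one
  | succ n ih =>
    rw [pow_succ]
    exact (hv.memPow_mul ih hx).mono (by push_cast; linarith)

theorem memPow_natCast (hv : IsDiscVal v) (n : ℕ) : MemPow v 0 (n : K) := by
  induction n with
  | zero => exact Or.inl Nat.cast_zero
  | succ n ih => rw [Nat.cast_succ]; exact hv.memPow_add ih hv.memPow_one

theorem memPow_intCast (hv : IsDiscVal v) (n : ℤ) : MemPow v 0 (n : K) := by
  obtain ⟨k, rfl | rfl⟩ := n.eq_nat_or_neg
  · simpa using hv.memPow_natCast k
  · simpa using hv.memPow_neg (hv.memPow_natCast k)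

theorem map_add_eq_left (hv : IsDiscVal v) {x y : K} (hx : x ≠ 0)
    (hy : MemPow v (v x + 1) y) : x + y ≠ 0 ∧ v (x + y) = v x := by
  have key : ¬ MemPow v (v x + 1) (x + y) := fun h => by
    have := (hv.memPow_sub h hy).le (by simpa using hx)
    rw [add_sub_cancel_right] at this
    omega
  have h0 : x + y ≠ 0 := fun h => key (Or.inl h)
  have h1 : v x ≤ v (x + y) :=
    (hv.memPow_add (Or.inr le_rfl) (hy.mono (by omega))).le h0
  refine ⟨h0, le_antisymm ?_ h1⟩
  by_contra h
  exact key (Or.inr (by omega))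

/-- A natural number prime to the residue characteristic is a unit. -/
theorem map_natCast_eq_zero [CharZero K] (hv : IsDiscVal v) {p k : ℕ} (hp : 1 ≤ v (p : K))
    (hk : k ≠ 0) (hpk : Nat.Coprime k p) : v (k : K) = 0 := by
  have hk0 : (k : K) ≠ 0 := Nat.cast_ne_zero.mpr hk
  refine le_antisymm ?_ ((hv.memPow_natCast k).le hk0)
  by_contra! h
  have hb : (k : K) * (Nat.gcdA k p : ℤ) + p * (Nat.gcdB k p : ℤ) = 1 := by
    have := Nat.gcd_eq_gcd_ab k p
    rw [hpk] at this
    exact_mod_cast this.symm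
  have h1 : MemPow v 1 (1 : K) := by
    rw [← hb]
    exact hv.memPow_add
      ((hv.memPow_mul (M := 1) (Or.inr (by omega)) (hv.memPow_intCast _)).mono (by omega))
      ((hv.memPow_mul (M := 1) (Or.inr hp) (hv.memPow_intCast _)).mono (by omega))
  have := h1.le one_ne_zero
  rw [hv.map_one] at this
  omega

theorem memPow_factorial_inv [CharZero K] (hv : IsDiscVal v) {p : ℕ} (hpp : p.Prime)
    (hp : 1 ≤ v (p : K)) {i : ℕ} (hi : i < p) : MemPow v 0 ((i.factorial : K)⁻¹) := by
  have hf : (i.factorial : K) ≠ 0 := Nat.cast_ne_zero.mpr i.factorial_ne_zero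
  have h0 := hv.map_natCast_eq_zero hp i.factorial_ne_zero
    ((hpp.coprime_iff_not_dvd.2 fun h => hi.not_ge (hpp.dvd_factorial.1 h)).symm)
  have := hv.map_mul _ _ hf (inv_ne_zero hf)
  rw [mul_inv_cancel₀ hf, hv.map_one, h0] at this
  exact Or.inr (by omega)

/-- A solution of an Artin–Schreier equation has at worst the expected pole. -/
theorem memPow_of_artinSchreier (hv : IsDiscVal v) {p : ℕ} (hp : 2 ≤ p) {z w : K}
    (hz : z ^ p - z = w) {k : ℤ} (hk : k ≤ 0) (hw : MemPow v (p * k) w) : MemPow v k z := by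
  rcases eq_or_ne z 0 with rfl | hz0
  · exact Or.inl rfl
  refine Or.inr ?_
  by_contra! h
  have hp' : (2 : ℤ) ≤ p := by exact_mod_cast hp
  have h1 := hv.map_add_eq_left (pow_ne_zero p hz0) (y := -z)
    (hv.memPow_neg (Or.inr (by rw [hv.map_pow hz0]; nlinarith)))
  rw [← sub_eq_add_neg, hz, hv.map_pow hz0] at h1
  have := hw.le h1.1
  nlinarith

theorem map_eq_of_artinSchreier (hv : IsDiscVal v) {p : ℕ} (hp : 2 ≤ p) {z w : K}
    (hz : z ^ p - z = w) {k : ℤ} (hk : k < 0) (hw0 : w ≠ 0) (hw : v w = p * k) :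
    z ≠ 0 ∧ v z = k := by
  have hp' : (2 : ℤ) ≤ p := by exact_mod_cast hp
  have hz0 : z ≠ 0 := by
    rintro rfl
    apply hw0
    rw [← hz, zero_pow (by omega), sub_zero]
  have h1 := (hv.memPow_of_artinSchreier hp hz hk.le (Or.inr hw.ge)).le hz0
  refine ⟨hz0, le_antisymm ?_ h1⟩
  by_contra! h
  have h2 : MemPow v (p * k + 1) w := by
    rw [← hz]
    refine hv.memPow_sub (Or.inr ?_) (Or.inr ?_)
    · rw [hv.map_pow hz0]; nlinarith
    · nlinarith
  have := h2.le hw0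
  omega

theorem memPow_pow_sub_pow (hv : IsDiscVal v) {M N : ℤ} {x y : K} (hN : N ≤ 0)
    (hx : MemPow v N x) (hy : MemPow v N y) (hxy : MemPow v M (y - x)) {k p : ℕ} (hk : k ≤ p) :
    MemPow v (M + p * N) (y ^ k - x ^ k) := by
  rw [← (Commute.all y x).geom_sum₂_mul, add_comm]
  refine hv.memPow_mul (hv.memPow_sum _ fun i hi => ?_) hxy
  refine (hv.memPow_mul (hv.memPow_pow hy i) (hv.memPow_pow hx (k - 1 - i))).mono ?_
  rw [Finset.mem_range] at hi
  rw [← add_mul, ← Nat.cast_add]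
  exact mul_le_mul_of_nonpos_right (by exact_mod_cast (by omega)) hN

end IsDiscVal

theorem wittPolynomial_eq {K : Type*} [Field K] [CharZero K] {p : ℕ} (hp : p.Prime) (x y : K) :
    (x ^ p + y ^ p - (x + y) ^ p) / (p : K) =
      -∑ k ∈ Finset.Ioo 0 p, x ^ k * y ^ (p - k) * ((p.choose k / p : ℕ) : K) := by
  have hp0 : (p : K) ≠ 0 := Nat.cast_ne_zero.mpr hp.ne_zero
  rw [add_pow_prime_eq' hp, div_eq_iff hp0, sub_add_eq_sub_sub, sub_self, zero_sub, neg_mul,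
    mul_comm]

theorem IsDiscVal.memPow_wittPolynomial {K : Type*} [Field K] [CharZero K] {v : K → ℤ}
    (hv : IsDiscVal v) {p : ℕ} (hp : p.Prime) {M N C : ℤ} {x y : K} (hx : MemPow v M x)
    (hy : MemPow v N y) (hC : ∀ k : ℤ, 0 < k → k < p → C ≤ k * M + (p - k) * N) :
    MemPow v C ((x ^ p + y ^ p - (x + y) ^ p) / (p : K)) := by
  rw [wittPolynomial_eq hp]
  refine hv.memPow_neg (hv.memPow_sum _ fun k hk => ?_)
  rw [Finset.mem_Ioo] at hk
  refine (hv.memPow_mul (hv.memPow_mul (hv.memPow_pow hx k) (hv.memPow_pow hy (p - k)))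
    (hv.memPow_natCast _)).mono ?_
  rw [add_zero, Nat.cast_sub hk.2.le]
  exact hC k (by exact_mod_cast hk.1) (by exact_mod_cast hk.2)

theorem IsDiscVal.memPow_wittPolynomial_sub {K : Type*} [Field K] [CharZero K] {v : K → ℤ}
    (hv : IsDiscVal v) {p : ℕ} (hp : p.Prime) {M N : ℤ} {x y : K} (hN : N ≤ 0)
    (hx : MemPow v N x) (hy : MemPow v N y) (hxy : MemPow v M (y - x)) :
    MemPow v (M + p * N)
      ((y ^ p + 1 - (y + 1) ^ p) / (p : K) - (x ^ p + 1 - (x + 1) ^ p) / (p : K)) := by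
  have hx' := wittPolynomial_eq hp x 1
  have hy' := wittPolynomial_eq hp y 1
  simp only [one_pow, mul_one] at hx' hy'
  rw [hx', hy', neg_sub_neg, ← neg_sub, ← Finset.sum_sub_distrib]
  refine hv.memPow_neg (hv.memPow_sum _ fun k hk => ?_)
  rw [← sub_mul]
  rw [Finset.mem_Ioo] at hk
  exact (hv.memPow_mul (hv.memPow_pow_sub_pow hN hx hy hxy hk.2.le)
    (hv.memPow_natCast _)).mono (by omega)

section Orthogonal

variable {K L : Type*} [Field K] [Field L] [Algebra K L] {v : K → ℤ} {w : L → ℤ} {n : ℤ}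
  {ι : Type*} [Fintype ι] {e : ι → L}

/-- Elements whose valuations are distinct modulo the ramification index form an orthogonal
family over the base field. -/
theorem IsDiscVal.memPow_of_sum_smul (hw : IsDiscVal w)
    (hram : ∀ x : K, x ≠ 0 → w (algebraMap K L x) = n * v x) (he : ∀ i, e i ≠ 0)
    (hinj : ∀ i j, n ∣ w (e i) - w (e j) → i = j) {c : ι → K} {N : ℤ}
    (h : MemPow w N (∑ i, c i • e i)) (i : ι) : MemPow w N (c i • e i) := by
  classical
  by_contra hi
  have hval : ∀ j, c j ≠ 0 → w (c j • e j) = n * v (c j) + w (e j) := fun j hj => by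
    rw [Algebra.smul_def, hw.map_mul _ _ (by simpa using hj) (he j), hram _ hj]
  have hci : c i ≠ 0 := fun h0 => hi (Or.inl (by simp [h0]))
  obtain ⟨j, hj, hmin⟩ := Finset.exists_min_image (Finset.univ.filter fun j => c j ≠ 0)
    (fun j => w (c j • e j)) ⟨i, by simpa using hci⟩
  simp only [Finset.mem_filter, Finset.mem_univ, true_and] at hj hmin
  have hne : c j • e j ≠ 0 := smul_ne_zero hj (he j)
  have hlt : w (c j • e j) < N := by
    refine (hmin i hci).trans_lt ?_
    by_contra! h'
    exact hi (Or.inr h')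
  have hrest : MemPow w (w (c j • e j) + 1) (∑ k ∈ Finset.univ.erase j, c k • e k) := by
    refine hw.memPow_sum _ fun k hk => ?_
    by_cases hck : c k = 0
    · exact Or.inl (by simp [hck])
    refine Or.inr ?_
    have h1 := hmin k hck
    have h2 : w (c j • e j) ≠ w (c k • e k) := fun heq => by
      rw [hval j hj, hval k hck] at heq
      exact Finset.ne_of_mem_erase hk
        (hinj k j ⟨v (c j) - v (c k), by linear_combination -heq⟩)
    omega
  rw [← Finset.add_sum_erase _ _ (Finset.mem_univ j)] at h
  obtain ⟨h1, h2⟩ := hw.map_add_eq_left hne hrest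
  have := h.le h1
  omega

theorem IsDiscVal.exists_eq_sum_smul [FiniteDimensional K L] (hw : IsDiscVal w)
    (hram : ∀ x : K, x ≠ 0 → w (algebraMap K L x) = n * v x) (he : ∀ i, e i ≠ 0)
    (hinj : ∀ i j, n ∣ w (e i) - w (e j) → i = j)
    (hcard : Fintype.card ι = Module.finrank K L) (x : L) : ∃ c : ι → K, x = ∑ i, c i • e i := by
  have hli : LinearIndependent K e := by
    rw [Fintype.linearIndependent_iff]
    intro c hc i
    by_contra hci
    have h := hw.memPow_of_sum_smul hram he hinj
      (N := w (c i • e i) + 1) (Or.inl hc) i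
    have := h.le (smul_ne_zero hci (he i))
    omega
  have : Nonempty ι := Fintype.card_pos_iff.1 (hcard ▸ Module.finrank_pos)
  let b := basisOfLinearIndependentOfCardEqFinrank hli hcard
  refine ⟨b.repr x, ?_⟩
  conv_lhs => rw [← b.sum_repr x]
  simp [b]

end Orthogonal

/-- The `K`-linear map `T` raises valuations by at least `g`. -/
def Gain {K L : Type*} [Field K] [Field L] [Algebra K L] (w : L → ℤ) (g : ℤ)
    (T : Module.End K L) : Prop :=
  ∀ N x, MemPow w N x → MemPow w (N + g) (T x)

namespace Gain

variable {K L : Type*} [Field K] [Field L] [Algebra K L] {w : L → ℤ} {g h : ℤ}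
  {S T : Module.End K L}

theorem mono (hT : Gain w g T) (hgh : h ≤ g) : Gain w h T :=
  fun N x hx => (hT N x hx).mono (by omega)

theorem mul (hS : Gain w g S) (hT : Gain w h T) : Gain w (g + h) (S * T) :=
  fun N x hx => (hS _ _ (hT N x hx)).mono (by omega)

theorem one : Gain w 0 (1 : Module.End K L) :=
  fun N x hx => by simpa using hx

theorem pow (hT : Gain w g T) (n : ℕ) : Gain w (n * g) (T ^ n) := by
  induction n with
  | zero => simpa using one
  | succ n ih => rw [pow_succ]; exact (ih.mul hT).mono (by push_cast; linarith)

theorem add (hw : IsDiscVal w) (hS : Gain w g S) (hT : Gain w g T) : Gain w g (S + T) :=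
  fun N x hx => hw.memPow_add (hS N x hx) (hT N x hx)

theorem sub (hw : IsDiscVal w) (hS : Gain w g S) (hT : Gain w g T) : Gain w g (S - T) :=
  fun N x hx => hw.memPow_sub (hS N x hx) (hT N x hx)

theorem zero : Gain w g (0 : Module.End K L) := fun _ _ _ => Or.inl rfl

theorem sum (hw : IsDiscVal w) {ι : Type*} (s : Finset ι) {f : ι → Module.End K L}
    (hf : ∀ i ∈ s, Gain w g (f i)) : Gain w g (∑ i ∈ s, f i) :=
  Finset.sum_induction f (Gain w g) (fun _ _ => add hw) zero hf

theorem smul (hw : IsDiscVal w) {c : K} (hc : MemPow w g (algebraMap K L c))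
    (hT : Gain w h T) : Gain w (g + h) (c • T) := fun N x hx => by
  rw [LinearMap.smul_apply, Algebra.smul_def]
  exact (hw.memPow_mul hc (hT N x hx)).mono (by omega)

theorem natCast (hw : IsDiscVal w) {n : ℕ} (hn : MemPow w g (n : L)) :
    Gain w g (n : Module.End K L) := by
  rw [show (n : Module.End K L) = (n : K) • 1 by
    ext x; simp [Nat.cast_smul_eq_nsmul]]
  exact (smul hw (by simpa using hn) one).mono (by omega)

/-- The Frobenius congruence `(S + T) ^ p = S ^ p + T ^ p + p Q`. -/
theorem exists_add_pow_prime (hw : IsDiscVal w) {p : ℕ} (hp : p.Prime) (hST : Commute S T)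
    (hg : 0 ≤ g) (hS : Gain w g S) (hT : Gain w 0 T) :
    ∃ Q, Gain w g Q ∧ (S + T) ^ p = S ^ p + T ^ p + (p : Module.End K L) * Q := by
  refine ⟨_, sum hw _ fun k hk => ?_, hST.add_pow_prime_eq' hp⟩
  rw [Finset.mem_Ioo] at hk
  have h1 : (1 : ℤ) ≤ k := by exact_mod_cast hk.1
  exact (((hS.pow k).mul (hT.pow _)).mul (natCast hw (hw.memPow_natCast _))).mono (by nlinarith)

theorem exists_sum_pow_prime (hw : IsDiscVal w) {p : ℕ} (hp : p.Prime)
    {f : ℕ → Module.End K L} (hcomm : ∀ i j, Commute (f i) (f j)) {n : ℕ}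
    (hf : ∀ i < n, Gain w 0 (f i)) :
    ∃ Q, Gain w 0 Q ∧
      (∑ i ∈ Finset.range n, f i) ^ p = ∑ i ∈ Finset.range n, f i ^ p + (p : Module.End K L) * Q := by
  induction n with
  | zero => exact ⟨0, zero, by simp [hp.ne_zero]⟩
  | succ n ih =>
    obtain ⟨Q, hQ, hQe⟩ := ih fun i hi => hf i (by omega)
    obtain ⟨R, hR, hRe⟩ := exists_add_pow_prime hw hp
      (Commute.sum_left (Finset.range n) f (f n) fun i _ => hcomm i n) le_rfl
      (sum hw _ fun i hi => hf i (by rw [Finset.mem_range] at hi; omega)) (hf n (by omega))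
    refine ⟨Q + R, add hw hQ hR, ?_⟩
    rw [Finset.sum_range_succ, Finset.sum_range_succ, hRe, hQe, mul_add]
    abel

end Gain

section Automorphism

variable {K L : Type*} [Field K] [Field L] [Algebra K L] {w : L → ℤ} {σ : L ≃ₐ[K] L} {g : ℤ}

theorem IsDiscVal.memPow_map_mul_sub (hw : IsDiscVal w) (hg : 0 ≤ g) {x y : L} (hx : x ≠ 0)
    (hy : y ≠ 0) (hσx : MemPow w (w x + g) (σ x - x)) (hσy : MemPow w (w y + g) (σ y - y)) :
    MemPow w (w (x * y) + g) (σ (x * y) - x * y) := by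
  have hx' : MemPow w (w x) (σ x) := by
    have := hw.memPow_add (hσx.mono (by omega)) (Or.inr (le_refl (w x)))
    rwa [sub_add_cancel] at this
  rw [show σ (x * y) - x * y = σ x * (σ y - y) + (σ x - x) * y by rw [_root_.map_mul]; ring,
    hw.map_mul _ _ hx hy]
  exact hw.memPow_add ((hw.memPow_mul hx' hσy).mono (by omega))
    ((hw.memPow_mul hσx (Or.inr (le_refl (w y)))).mono (by omega))

theorem IsDiscVal.memPow_map_pow_sub (hw : IsDiscVal w) (hg : 0 ≤ g) {x : L} (hx : x ≠ 0)
    (hσx : MemPow w (w x + g) (σ x - x)) (n : ℕ) :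
    MemPow w (w (x ^ n) + g) (σ (x ^ n) - x ^ n) := by
  induction n with
  | zero => exact Or.inl (by simp)
  | succ n ih =>
    rw [pow_succ]
    exact hw.memPow_map_mul_sub hg (pow_ne_zero n hx) hx ih hσx

theorem gain_sub_one {v : K → ℤ} {n : ℤ} {ι : Type*} [Fintype ι] {e : ι → L} (hw : IsDiscVal w)
    (hram : ∀ x : K, x ≠ 0 → w (algebraMap K L x) = n * v x) (he : ∀ i, e i ≠ 0)
    (hinj : ∀ i j, n ∣ w (e i) - w (e j) → i = j) [FiniteDimensional K L]
    (hcard : Fintype.card ι = Module.finrank K L)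
    (hσ : ∀ i, MemPow w (w (e i) + g) (σ (e i) - e i)) :
    Gain w g ((σ.toLinearMap : Module.End K L) - 1) := by
  intro N x hx
  obtain ⟨c, rfl⟩ := hw.exists_eq_sum_smul hram he hinj hcard x
  have hterm := hw.memPow_of_sum_smul hram he hinj hx
  rw [map_sum]
  refine hw.memPow_sum _ fun i _ => ?_
  have hval : ((σ.toLinearMap : Module.End K L) - 1) (c i • e i)
      = algebraMap K L (c i) * (σ (e i) - e i) := by
    simp [Algebra.smul_def, mul_sub]
  rw [hval]
  rcases eq_or_ne (c i) 0 with h0 | h0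
  · exact Or.inl (by simp [h0])
  have h1 := (hterm i).le (smul_ne_zero h0 (he i))
  have h2 : algebraMap K L (c i) ≠ 0 := by simpa using h0
  rw [Algebra.smul_def, hw.map_mul _ _ h2 (he i)] at h1
  exact (hw.memPow_mul (Or.inr le_rfl) (hσ i)).mono (by omega)

/-- An automorphism of `p`-power order at most `p ^ 2` permuting the at most `p` roots of an
Artin–Schreier polynomial has a `p`-th power fixing them. -/
theorem pow_apply_eq_of_artinSchreier {p : ℕ} (hp : p.Prime) (hσ : σ ^ p ^ 2 = 1) {x : L} {a : K}
    (hx : x ^ p - x = algebraMap K L a) : (σ ^ p) x = x := by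
  have hiter : ∀ n, (σ ^ n) x = (⇑σ)^[n] x := fun n => by
    rw [AlgEquiv.coe_pow]
  have hper : Function.IsPeriodicPt σ (p ^ 2) x := by
    rw [Function.IsPeriodicPt, Function.IsFixedPt, ← hiter, hσ, AlgEquiv.one_apply]
  obtain ⟨k, hk, hkp⟩ := (Nat.dvd_prime_pow hp).1 hper.minimalPeriod_dvd
  have hle : Function.minimalPeriod σ x ≤ p := by
    let P : Polynomial L := Polynomial.X ^ p - Polynomial.X - Polynomial.C (algebraMap K L a)
    have hdeg : P.natDegree = p := by
      have := hp.two_le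
      simp only [P]
      compute_degree <;> grind
    have hP : P ≠ 0 := fun h => hp.ne_zero (by rw [← hdeg, h, Polynomial.natDegree_zero])
    classical
    calc Function.minimalPeriod σ x
        = ((Finset.range (Function.minimalPeriod σ x)).image fun n => (⇑σ)^[n] x).card := by
          rw [Finset.card_image_of_injOn, Finset.card_range]
          simpa using Function.iterate_injOn_Iio_minimalPeriod (f := σ) (x := x)
      _ ≤ P.roots.toFinset.card := by
          refine Finset.card_le_card fun y hy => ?_
          obtain ⟨n, -, rfl⟩ := Finset.mem_image.1 hy
          rw [Multiset.mem_toFinset, Polynomial.mem_roots hP, ← hiter]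
          have := congrArg (σ ^ n) hx
          rw [map_sub, map_pow, AlgEquiv.commutes] at this
          rw [Polynomial.IsRoot, Polynomial.eval_sub, Polynomial.eval_sub, Polynomial.eval_pow,
            Polynomial.eval_X, Polynomial.eval_C, this, sub_self]
      _ ≤ p := (Multiset.toFinset_card_le _).trans ((Polynomial.card_roots' P).trans hdeg.le)
  have hdvd : Function.minimalPeriod σ x ∣ p := by
    rw [hkp] at hle ⊢
    have : k ≤ 1 := (Nat.pow_le_pow_iff_right hp.one_lt).1 (by simpa using hle)
    simpa using pow_dvd_pow p this
  rw [hiter]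
  exact Function.isPeriodicPt_iff_minimalPeriod_dvd.2 hdvd

end Automorphism

theorem IsDiscVal.memPow_pow_apply_sub {K L : Type*} [Field K] [Field L] [CharZero L]
    [Algebra K L]
    {w : L → ℤ} (hw : IsDiscVal w) {p : ℕ} (hp : p.Prime) {σ : L ≃ₐ[K] L}
    (hσ : ∀ {N : ℤ} {x : L}, MemPow w N x → MemPow w N (σ x)) {x y ε δ : L} {A E N : ℤ}
    (hN : N ≤ 0) (hA : 0 ≤ A + p * N) (hE0 : 0 ≤ E) (hE : 0 ≤ E + p * N)
    (hpE : MemPow w E (p : L)) (hx : MemPow w N x) (hε : MemPow w A ε) (hδ : MemPow w 0 δ)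
    (hσx : σ x = x + 1 + ε) (hσy : σ y = y + (x ^ p + 1 - (x + 1) ^ p) / (p : L) + δ) :
    MemPow w 0 ((σ ^ p) y - y) := by
  have hp0 : (p : L) ≠ 0 := Nat.cast_ne_zero.mpr hp.ne_zero
  have hσj : ∀ (j : ℕ) {M : ℤ} {z : L}, MemPow w M z → MemPow w M ((σ ^ j) z) := by
    intro j
    induction j with
    | zero => exact fun hz => by simpa using hz
    | succ j ih => exact fun hz => by rw [pow_succ]; exact ih (hσ hz)
  have hxj : ∀ j : ℕ, MemPow w A ((σ ^ j) x - (x + j)) := by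
    intro j
    induction j with
    | zero => exact Or.inl (by simp)
    | succ j ih =>
      have h : (σ ^ (j + 1)) x - (x + (j + 1 : ℕ)) = σ ((σ ^ j) x - (x + j)) + ε := by
        rw [pow_succ', AlgEquiv.mul_apply, map_sub, map_add, hσx, map_natCast]
        push_cast; ring
      rw [h]
      exact hw.memPow_add (hσ ih) hε
  have hyj : ∀ j : ℕ,
      MemPow w 0 ((σ ^ j) y - y - (x ^ p - (x + j) ^ p + j) / (p : L)) := by
    intro j
    induction j with
    | zero => exact Or.inl (by simp)
    | succ j ih =>
      have hxj' : MemPow w N (x + j) :=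
        hw.memPow_add hx ((hw.memPow_natCast j).mono hN)
      have hd := hw.memPow_wittPolynomial_sub hp hN hxj' (hσj j hx) (hxj j)
      have h : (σ ^ (j + 1)) y - y - (x ^ p - (x + (j + 1 : ℕ)) ^ p + (j + 1 : ℕ)) / (p : L)
          = ((σ ^ j) y - y - (x ^ p - (x + j) ^ p + j) / (p : L))
            + ((((σ ^ j) x) ^ p + 1 - ((σ ^ j) x + 1) ^ p) / (p : L)
              - ((x + j) ^ p + 1 - (x + j + 1) ^ p) / (p : L)) + (σ ^ j) δ := by
        rw [pow_succ, AlgEquiv.mul_apply, hσy]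
        simp only [map_add, map_sub, _root_.map_pow, _root_.map_one, map_div₀, map_natCast]
        push_cast
        rw [← add_assoc x]
        ring
      rw [h]
      exact hw.memPow_add (hw.memPow_add ih (hd.mono hA)) (hσj j hδ)
  have hW : MemPow w 0 ((x ^ p + (p : L) ^ p - (x + p) ^ p) / (p : L)) := by
    refine hw.memPow_wittPolynomial hp hx hpE fun k hk hkp => ?_
    have h1 := mul_nonneg (by omega : 0 ≤ (p : ℤ) - k - 1) hE0
    have h2 := mul_nonneg (by omega : 0 ≤ (p : ℤ) - k) (neg_nonneg.2 hN)
    linarith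
  have hsplit : (σ ^ p) y - y = ((σ ^ p) y - y - (x ^ p - (x + p) ^ p + p) / (p : L))
      + ((x ^ p + (p : L) ^ p - (x + p) ^ p) / (p : L)) + 1 - ((p ^ (p - 1) : ℕ) : L) := by
    have hpow : (p : L) ^ p = p * p ^ (p - 1) := (mul_pow_sub_one hp.ne_zero _).symm
    rw [hpow]
    push_cast
    field_simp
    ring
  rw [hsplit]
  exact hw.memPow_sub (hw.memPow_add (hw.memPow_add (hyj p) hW) hw.memPow_one)
    (hw.memPow_natCast _)

theorem Int.eq_and_eq_of_sq_dvd {p : ℕ} (hp : p.Prime) {b m : ℤ} (hb : ¬ (p : ℤ) ∣ b)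
    {i i' j j' : Fin p} (h : (p : ℤ) ^ 2 ∣
      -((i : ℕ) * (p * b) + (i' : ℕ) * ((p : ℤ) ^ 2 * m + b)) -
        -((j : ℕ) * (p * b) + (j' : ℕ) * ((p : ℤ) ^ 2 * m + b))) : i = j ∧ i' = j' := by
  have hpp : Prime (p : ℤ) := Nat.prime_iff_prime_int.1 hp
  have hfin : ∀ k l : Fin p, (p : ℤ) ∣ b * (((k : ℕ) : ℤ) - ((l : ℕ) : ℤ)) → k = l :=
    fun k l hkl => by
      have hmod := Int.eq_zero_of_abs_lt_dvd ((hpp.dvd_or_dvd hkl).resolve_left hb)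
        (by rw [abs_lt]; omega)
      exact Fin.ext (by omega)
  obtain ⟨t, ht⟩ := h
  have h2 : i' = j' := hfin _ _
    ⟨-(p * t + ((i : ℕ) - (j : ℕ)) * b + ((i' : ℕ) - (j' : ℕ)) * (p * m)), by
      linear_combination -ht⟩
  subst h2
  exact ⟨hfin _ _ ⟨-t, mul_left_cancel₀ hpp.ne_zero (by linear_combination -ht)⟩, rfl⟩

/-- If `Ψ = σ ^ p - 1` raises valuations by `b`, then `σ` times a truncated exponentiation of
`σ ^ p` is, after subtracting `1` and up to a controlled error, a `p`-th root of `Ψ`. -/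
theorem gain_truncatedExp_pow_sub {K L : Type*} [Field K] [Field L] [Algebra K L] {w : L → ℤ}
    (hw : IsDiscVal w) {p : ℕ} (hp : p.Prime) {σ : L ≃ₐ[K] L} (hσp : σ ^ p ^ 2 = 1)
    {E M b g : ℤ} (hE : MemPow w E (p : L)) (hM : 0 ≤ M) (hMb : M ≤ b)
    (hEM : 0 ≤ E + b - p * M) (hgE : g ≤ E) (hg : g ≤ E + b - p * M)
    (hσ : Gain w 0 (σ.toLinearMap : Module.End K L)) {Φ Ψ : Module.End K L}
    (hΨ : Ψ = ((σ ^ p).toLinearMap : Module.End K L) - 1) (hΨb : Gain w b Ψ)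
    {c : ℕ → K} (hc0 : c 0 = 1) (hc : ∀ i < p, MemPow w (-(i * M)) (algebraMap K L (c i)))
    (hΦ : Φ = (σ.toLinearMap : Module.End K L) * (∑ i ∈ Finset.range p, c i • Ψ ^ i) - 1) :
    Gain w 0 Φ ∧ Gain w g (Φ ^ p - Ψ) := by
  set s : Module.End K L := (σ.toLinearMap : Module.End K L) with hs
  have hspow : ∀ n, ((σ ^ n).toLinearMap : Module.End K L) = s ^ n := fun n => by
    ext x; rw [hs, Module.End.pow_apply, AlgEquiv.toLinearMap_apply, AlgEquiv.coe_pow]; rfl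
  rw [hspow] at hΨ
  have hs1 : s ^ p ^ 2 = 1 := by
    rw [← hspow, hσp]; rfl
  have hpE : Gain w E (p : Module.End K L) := Gain.natCast hw hE
  have hb0 : 0 ≤ b := hM.trans hMb
  have hΨp : Gain w (E + b) (Ψ ^ p) := by
    obtain ⟨Q, hQ, hQe⟩ := Gain.exists_add_pow_prime hw hp (Commute.one_right Ψ) hb0 hΨb Gain.one
    rw [show Ψ + 1 = s ^ p by rw [hΨ]; abel, ← pow_mul, ← sq, hs1, one_pow] at hQe
    rw [show Ψ ^ p = 0 - p * Q by
      rw [zero_sub, eq_neg_iff_add_eq_zero]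
      have := congrArg (· - 1) hQe.symm
      simp only [sub_self] at this
      rw [← this]; abel]
    exact Gain.sub hw Gain.zero (hpE.mul hQ)
  set f : ℕ → Module.End K L := fun i => c i • Ψ ^ i with hf
  have hfg : ∀ i < p, Gain w 0 (f i) := fun i hi =>
    (Gain.smul hw (hc i hi) (hΨb.pow i)).mono (by
      have : (0 : ℤ) ≤ i := Nat.cast_nonneg i
      nlinarith)
  have hfcomm : ∀ i j, Commute (f i) (f j) := fun i j =>
    (((Commute.refl Ψ).pow_pow i j).smul_left (c i)).smul_right (c j)
  have hsum : Gain w 0 (∑ i ∈ Finset.range p, f i) :=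
    Gain.sum hw _ fun i hi => hfg i (Finset.mem_range.1 hi)
  have hΦ0 : Gain w 0 Φ := by
    rw [hΦ]
    exact Gain.sub hw ((hσ.mul hsum).mono (by omega)) Gain.one
  refine ⟨hΦ0, ?_⟩
  obtain ⟨Q, hQ, hQe⟩ := Gain.exists_sum_pow_prime hw hp hfcomm hfg
  obtain ⟨R, hR, hRe⟩ :=
    Gain.exists_add_pow_prime hw hp (Commute.one_right Φ) le_rfl hΦ0 Gain.one
  have hfp : ∀ i < p, i ≠ 0 → Gain w g (f i ^ p) := fun i hi hi0 => by
    have h1 : (1 : ℤ) ≤ i := by exact_mod_cast Nat.one_le_iff_ne_zero.2 hi0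
    rw [hf]
    simp only
    rw [smul_pow, ← pow_mul, mul_comm i p, pow_mul]
    refine (Gain.smul hw (g := p * -(i * M)) ?_ (hΨp.pow i)).mono (by nlinarith)
    rw [map_pow]
    exact hw.memPow_pow (hc i hi) p
  have herr : Gain w g (∑ i ∈ (Finset.range p).erase 0, f i ^ p + (p : Module.End K L) * Q) := by
    refine Gain.add hw (Gain.sum hw _ fun i hi => ?_) ((hpE.mul hQ).mono (by omega))
    rw [Finset.mem_erase, Finset.mem_range] at hi
    exact hfp i hi.2 hi.1
  have hcomm : Commute s (∑ i ∈ Finset.range p, f i) := by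
    refine Commute.sum_right _ _ _ fun i _ => Commute.smul_right (Commute.pow_right ?_ i) _
    rw [hΨ]
    exact ((Commute.refl s).pow_right p).sub_right (Commute.one_right s)
  rw [show Φ + 1 = s * ∑ i ∈ Finset.range p, f i by rw [hΦ]; abel, hcomm.mul_pow, hQe,
    ← Finset.add_sum_erase _ _ (Finset.mem_range.2 hp.pos),
    show f 0 = 1 by simp [hf, hc0], one_pow, add_assoc (1 : Module.End K L), mul_add, mul_one] at hRe
  rw [show Φ ^ p - Ψ
      = s ^ p * (∑ i ∈ (Finset.range p).erase 0, f i ^ p + (p : Module.End K L) * Q) - p * R by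
    rw [eq_sub_iff_add_eq, hΨ]
    have := congrArg (· - s ^ p) hRe.symm
    simp only [add_sub_cancel_left] at this
    rw [← this]
    abel]
  exact Gain.sub hw (((hσ.pow p).mul herr).mono (by simp)) ((hpE.mul hR).mono (by omega))

set_option maxHeartbeats 1000000 in
/-- for `ρ ∈ K₂` with `v₂(ρ) = b₂`,
`Ψ₁^p ρ ≡ (σ₁^p − 1)ρ ≡ Ψ₂ ρ mod 𝔐₂^{p²e₀ + p·b₁ − (p−1)·b₂}` and consequently
`Ψ₁^{p+r} Ψ₂^s ρ ≡ Ψ₁^r Ψ₂^{s+1} ρ mod 𝔐₂^{p²e₀ + (r+1)p·b₁ − (p−1−s)·b₂}`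
for `0 ≤ r,s ≤ p−1`.  Congruence `x ≡ y mod 𝔐₂^N` is encoded as
`x − y = 0 ∨ N ≤ v₂(x − y)`. -/
theorem statement12
    (p : ℕ) (hp : p.Prime)
    (K0 K2 : Type*) [Field K0] [Field K2] [CharZero K0] [CharZero K2]
    [Algebra K0 K2] [IsGalois K0 K2] [FiniteDimensional K0 K2]
    (hdeg : Module.finrank K0 K2 = p ^ 2)
    (hcyc : IsCyclic (K2 ≃ₐ[K0] K2))
    (v0 : K0 → ℤ) (v2 : K2 → ℤ)
    (hv0 : IsDiscVal v0) (hv2 : IsDiscVal v2)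
    (e0 : ℤ) (he0 : e0 = v0 (p : K0)) (he0pos : 1 ≤ e0)
    (hram : ∀ x : K0, x ≠ 0 → v2 (algebraMap K0 K2 x) = (p : ℤ) ^ 2 * v0 x)
    (a1 μ a2 : K0) (ha1 : a1 ≠ 0) (hμ0 : μ ≠ 0)
    (hwitt : ∀ y : K0, y ^ p - y ≠ a1)
    (hnd : ¬ ((p : ℤ) ∣ v0 a1))
    (hneg : v0 a1 < 0)
    (hbd : -((p : ℤ) * e0) < ((p : ℤ) ^ 2 - 1) * v0 a1)
    (m : ℤ) (hm : m = -v0 μ) (hmpos : 0 < m)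
    (hmu1 : (p : ℤ) ^ 2 * (p - 1) * m - (2 * p * (p - 1) + 1) * v0 a1 < (p : ℤ) ^ 2 * e0)
    (hmu2 : -(((p : ℤ) ^ 2 - 1) * v0 a1) < (p : ℤ) ^ 2 * m)
    (ha2 : a2 = μ ^ p * a1)
    (x1 x2 : K2)
    (hx1 : x1 ^ p - x1 = algebraMap K0 K2 a1)
    (hx2 : x2 ^ p - x2 = algebraMap K0 K2 a2 +
      (x1 ^ p + (algebraMap K0 K2 a1) ^ p - (x1 + algebraMap K0 K2 a1) ^ p) / (p : K2))
    (hgen : Algebra.adjoin K0 {x1, x2} = ⊤)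
    (b1 b2 : ℤ) (hb1 : b1 = -v0 a1) (hb2 : b2 = (p : ℤ) ^ 2 * m + b1)
    (σ1 : K2 ≃ₐ[K0] K2) (ε δ' : K2)
    (hσ1x1 : σ1 x1 = x1 + 1 + ε)
    (hε : ε ≠ 0) (hεv : v2 ε = (p : ℤ) ^ 2 * e0 - p * (p - 1) * b1)
    (hσ1x2 : σ1 x2 = x2 + (x1 ^ p + 1 - (x1 + 1) ^ p) / (p : K2) + δ')
    (hδ' : δ' = 0 ∨ 0 < v2 δ')
    (Ψ1 Ψ2 : Module.End K0 K2)
    (hΨ2 : Ψ2 = ((σ1 ^ p).toLinearMap : Module.End K0 K2) - 1)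
    (hΨ1 : Ψ1 = (σ1.toLinearMap : Module.End K0 K2) *
      (∑ i ∈ Finset.range p,
        ((∏ k ∈ Finset.range i, (μ - (k : K0))) / (Nat.factorial i : K0)) • Ψ2 ^ i) - 1) :
    ∀ ρ : K2, ρ ≠ 0 → v2 ρ = b2 →
      ((Ψ1 ^ p) ρ - (((σ1 ^ p).toLinearMap : Module.End K0 K2) ρ - ρ) = 0 ∨
        (p : ℤ) ^ 2 * e0 + p * b1 - (p - 1) * b2 ≤
          v2 ((Ψ1 ^ p) ρ - (((σ1 ^ p).toLinearMap : Module.End K0 K2) ρ - ρ))) ∧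
      ((Ψ1 ^ p) ρ - Ψ2 ρ = 0 ∨
        (p : ℤ) ^ 2 * e0 + p * b1 - (p - 1) * b2 ≤ v2 ((Ψ1 ^ p) ρ - Ψ2 ρ)) ∧
      (∀ r s : ℕ, r ≤ p - 1 → s ≤ p - 1 →
        ((Ψ1 ^ (p + r) * Ψ2 ^ s) ρ - (Ψ1 ^ r * Ψ2 ^ (s + 1)) ρ = 0 ∨
          (p : ℤ) ^ 2 * e0 + ((r : ℤ) + 1) * p * b1 - ((p : ℤ) - 1 - s) * b2 ≤
            v2 ((Ψ1 ^ (p + r) * Ψ2 ^ s) ρ - (Ψ1 ^ r * Ψ2 ^ (s + 1)) ρ))) := by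
  intro ρ hρ0 hρ
  set P : ℤ := (p : ℤ) with hPdef
  have hP2 : 2 ≤ P := by rw [hPdef]; exact_mod_cast hp.two_le
  have hv0a1 : v0 a1 = -b1 := by omega
  have hv0μ : v0 μ = -m := by omega
  rw [hv0a1] at hbd hmu1 hmu2 hnd hneg
  have hb1pos : 1 ≤ b1 := by omega
  have hb1P : P * b1 + 1 ≤ P ^ 2 * b1 := by
    have := mul_pos (mul_pos (by omega : 0 < P) (by omega : 0 < P - 1)) (by omega : 0 < b1)
    linarith
  have hb1PP : 2 * (P ^ 2 * b1) ≤ P ^ 3 * b1 := by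
    have := mul_nonneg (mul_nonneg (sq_nonneg P) (by omega : 0 ≤ b1)) (by omega : 0 ≤ P - 2)
    linarith
  have hPb1 : 2 * b1 ≤ P * b1 := by nlinarith
  have he0b : P ^ 3 * b1 - P * b1 ≤ P ^ 2 * e0 := by nlinarith
  have hb2b1 : P ^ 2 * b1 ≤ b2 := by linarith
  have hb2m : P ^ 2 * m ≤ b2 := by linarith
  have hpm : 2 * (P ^ 2 * m) ≤ P ^ 3 * m := by
    have := mul_nonneg (mul_nonneg (sq_nonneg P) (by omega : 0 ≤ m)) (by omega : 0 ≤ P - 2)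
    linarith
  have hPm : P * (P ^ 2 * b1 - b1) ≤ P ^ 3 * m := by nlinarith
  have hm0 : 0 < P ^ 2 * m := by positivity
  have hmap : ∀ {N : ℤ} {x : K0}, MemPow v0 N x → MemPow v2 (P ^ 2 * N) (algebraMap K0 K2 x) := by
    intro N x hx
    rcases eq_or_ne x 0 with rfl | hx0
    · exact Or.inl (map_zero _)
    · refine Or.inr ?_
      rw [hram x hx0]
      exact mul_le_mul_of_nonneg_left (hx.le hx0) (by positivity)
  have hpv : MemPow v2 (P ^ 2 * e0) (p : K2) := by
    simpa using hmap (x := (p : K0)) (Or.inr he0.le)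
  have ha1' : algebraMap K0 K2 a1 ≠ 0 := by simpa using ha1
  have hμ' : algebraMap K0 K2 μ ≠ 0 := by simpa using hμ0
  have hva1 : v2 (algebraMap K0 K2 a1) = -(P ^ 2 * b1) := by
    rw [hram _ ha1, hv0a1]; ring
  have hvμ : v2 (algebraMap K0 K2 μ) = -(P ^ 2 * m) := by
    rw [hram _ hμ0, hv0μ]; ring
  obtain ⟨hx10, hvx1⟩ := hv2.map_eq_of_artinSchreier hp.two_le hx1 (k := -(P * b1))
    (by linarith) ha1' (by rw [hva1]; ring)
  have hx1m : MemPow v2 (-(P * b1)) x1 := Or.inr hvx1.ge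
  have hD : MemPow v2 (-(P ^ 3 * b1 - P ^ 2 * b1 + P * b1))
      ((x1 ^ p + (algebraMap K0 K2 a1) ^ p - (x1 + algebraMap K0 K2 a1) ^ p) / (p : K2)) := by
    refine hv2.memPow_wittPolynomial hp hx1m (Or.inr hva1.ge) fun k hk _ => ?_
    have := mul_nonneg (by omega : 0 ≤ k - 1) (by linarith : 0 ≤ P ^ 2 * b1 - P * b1)
    linarith
  have hμx1 : MemPow v2 (-(P ^ 2 * m + P * b1)) (algebraMap K0 K2 μ * x1) :=
    (hv2.memPow_mul (Or.inr hvμ.ge) hx1m).mono (by linarith)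
  have hx2m : MemPow v2 (-(P ^ 2 * m + P * b1)) x2 := by
    refine hv2.memPow_of_artinSchreier hp.two_le hx2 (by linarith) (hv2.memPow_add ?_ ?_)
    · rw [ha2, map_mul, map_pow]
      refine (hv2.memPow_mul (hv2.memPow_pow (Or.inr hvμ.ge) p) (Or.inr hva1.ge)).mono ?_
      linarith
    · exact hD.mono (by linarith)
  set Y : K2 := x2 - algebraMap K0 K2 μ * x1 with hY
  have hYm : MemPow v2 (-(P ^ 2 * m + P * b1)) Y := hv2.memPow_sub hx2m hμx1
  obtain ⟨hY0, hvY⟩ : Y ≠ 0 ∧ v2 Y = -b2 := by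
    have hcross := hv2.memPow_wittPolynomial hp hYm hμx1
      (C := -(P * (P ^ 2 * m + P * b1))) fun k _ _ => by linarith
    have hp0 : (p : K2) ≠ 0 := Nat.cast_ne_zero.mpr hp.ne_zero
    have hmain0 : -((algebraMap K0 K2 μ) ^ p * x1) ≠ 0 :=
      neg_ne_zero.2 (mul_ne_zero (pow_ne_zero _ hμ') hx10)
    have hmain : v2 (-((algebraMap K0 K2 μ) ^ p * x1)) = -(P ^ 3 * m + P * b1) := by
      rw [hv2.map_neg (neg_ne_zero.1 hmain0), hv2.map_mul _ _ (pow_ne_zero _ hμ') hx10,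
        hv2.map_pow hμ', hvμ, hvx1]
      ring
    have hrest := hv2.map_add_eq_left hmain0
      (y := (x1 ^ p + (algebraMap K0 K2 a1) ^ p - (x1 + algebraMap K0 K2 a1) ^ p) / (p : K2)
        + algebraMap K0 K2 μ * x1 + p * ((Y ^ p + (algebraMap K0 K2 μ * x1) ^ p
          - (Y + algebraMap K0 K2 μ * x1) ^ p) / (p : K2))) (by
      rw [hmain]
      refine hv2.memPow_add (hv2.memPow_add (hD.mono (by linarith)) (hμx1.mono (by linarith)))
        ((hv2.memPow_mul hpv hcross).mono (by linarith)))
    rw [hmain] at hrest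
    refine hv2.map_eq_of_artinSchreier hp.two_le ?_ (by linarith) hrest.1
      (by rw [hrest.2, hb2]; ring)
    have hYx : Y + algebraMap K0 K2 μ * x1 = x2 := by rw [hY]; ring
    rw [mul_div_cancel₀ _ hp0, hYx]
    rw [ha2, map_mul, map_pow] at hx2
    linear_combination hx2 - (algebraMap K0 K2 μ) ^ p * hx1 - hYx
  have hcardG : Nat.card (K2 ≃ₐ[K0] K2) = p ^ 2 := by
    rw [IsGalois.card_aut_eq_finrank, hdeg]
  have hσp : σ1 ^ p ^ 2 = 1 := by rw [← hcardG]; exact pow_card_eq_one'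
  have hσ2x1 : (σ1 ^ p) x1 = x1 := pow_apply_eq_of_artinSchreier hp hσp hx1
  -- The orthogonal basis `x1 ^ i * Y ^ j`
  let e : Fin p × Fin p → K2 := fun i => x1 ^ (i.1 : ℕ) * Y ^ (i.2 : ℕ)
  have he : ∀ i, e i ≠ 0 := fun i => mul_ne_zero (pow_ne_zero _ hx10) (pow_ne_zero _ hY0)
  have hve : ∀ i, v2 (e i) = -((i.1 : ℕ) * (P * b1) + (i.2 : ℕ) * b2) := fun i => by
    rw [hv2.map_mul _ _ (pow_ne_zero _ hx10) (pow_ne_zero _ hY0), hv2.map_pow hx10,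
      hv2.map_pow hY0, hvx1, hvY]
    ring
  have hnb1 : ¬ P ∣ b1 := by rwa [dvd_neg] at hnd
  have hinj : ∀ i j, P ^ 2 ∣ v2 (e i) - v2 (e j) → i = j := by
    rintro i j hij
    rw [hve, hve, hb2] at hij
    exact Prod.ext_iff.2 (Int.eq_and_eq_of_sq_dvd hp hnb1 hij)
  have hcard : Fintype.card (Fin p × Fin p) = Module.finrank K0 K2 := by
    rw [hdeg, Fintype.card_prod, Fintype.card_fin, sq]
  have hbasis : ∀ {g : ℤ} {σ : K2 ≃ₐ[K0] K2}, 0 ≤ g → MemPow v2 (v2 x1 + g) (σ x1 - x1) →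
      MemPow v2 (v2 Y + g) (σ Y - Y) → Gain v2 g ((σ.toLinearMap : Module.End K0 K2) - 1) :=
    fun hg h1 h2 => gain_sub_one hv2 hram he hinj hcard fun i =>
      hv2.memPow_map_mul_sub hg (pow_ne_zero _ hx10) (pow_ne_zero _ hY0)
        (hv2.memPow_map_pow_sub hg hx10 h1 _) (hv2.memPow_map_pow_sub hg hY0 h2 _)
  have hεm : MemPow v2 (P ^ 2 * e0 - P ^ 2 * b1 + P * b1) ε := Or.inr (by rw [hεv]; linarith)
  have h1ε : MemPow v2 0 (1 + ε) := hv2.memPow_add hv2.memPow_one (hεm.mono (by linarith))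
  have hδm : MemPow v2 0 δ' := hδ'.imp_right le_of_lt
  have hσ1 : Gain v2 0 (σ1.toLinearMap : Module.End K0 K2) := by
    have h : Gain v2 0 ((σ1.toLinearMap : Module.End K0 K2) - 1) := by
      refine hbasis le_rfl ?_ ?_
      · rw [hσ1x1, add_assoc, add_sub_cancel_left, hvx1]
        exact h1ε.mono (by linarith)
      · have hD1 := hv2.memPow_wittPolynomial hp hx1m hv2.memPow_one (C := -(P ^ 2 * b1))
          fun k _ hk => by
            have := mul_nonneg (by linarith : 0 ≤ P - k) (by linarith : 0 ≤ P * b1)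
            linarith
        rw [one_pow] at hD1
        rw [show σ1 Y - Y = (x1 ^ p + 1 - (x1 + 1) ^ p) / (p : K2) + δ'
            - algebraMap K0 K2 μ * (1 + ε) by
          rw [hY, map_sub, map_mul, AlgEquiv.commutes, hσ1x1, hσ1x2]; ring, hvY]
        exact hv2.memPow_sub
          (hv2.memPow_add (hD1.mono (by linarith)) (hδm.mono (by linarith)))
          ((hv2.memPow_mul (Or.inr hvμ.ge) h1ε).mono (by linarith))
    simpa using Gain.add hv2 h Gain.one
  have hσ1m : ∀ {N x}, MemPow v2 N x → MemPow v2 N (σ1 x) := fun {N x} hx => by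
    simpa using hσ1 N x hx
  have hΨ2g : Gain v2 b2 Ψ2 := by
    rw [hΨ2]
    refine hbasis (by linarith) (Or.inl (by rw [hσ2x1, sub_self])) ?_
    have hx2σ := hv2.memPow_pow_apply_sub hp hσ1m (by linarith) (by linarith)
      (by linarith) (by linarith) hpv hx1m hεm hδm hσ1x1 hσ1x2
    rw [hvY, neg_add_cancel, hY, map_sub, map_mul, AlgEquiv.commutes, hσ2x1,
      sub_sub_sub_cancel_right]
    exact hx2σ
  have hchoose : ∀ i < p, MemPow v2 (-(i * (P ^ 2 * m))) (algebraMap K0 K2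
      ((∏ k ∈ Finset.range i, (μ - (k : K0))) / (Nat.factorial i : K0))) := by
    intro i hi
    have hprod : ∀ n : ℕ, MemPow v0 (-(n * m)) (∏ k ∈ Finset.range n, (μ - (k : K0))) := by
      intro n
      induction n with
      | zero => simpa using hv0.memPow_one
      | succ n ih =>
        rw [Finset.prod_range_succ]
        exact (hv0.memPow_mul ih (hv0.memPow_sub (Or.inr hv0μ.ge)
          ((hv0.memPow_natCast n).mono (by omega)))).mono (by push_cast; linarith)
    rw [div_eq_mul_inv]
    exact (hmap (hv0.memPow_mul (hprod i)
      (hv0.memPow_factorial_inv hp (he0 ▸ he0pos) hi))).mono (by linarith)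
  obtain ⟨hΨ1g, hdiff⟩ := gain_truncatedExp_pow_sub hv2 hp hσp (E := P ^ 2 * e0)
    (g := P ^ 2 * e0 + P ^ 2 * b1 - P * b2) hpv hm0.le hb2m (by rw [hb2]; linarith)
    (by nlinarith) (by rw [hb2] at *; nlinarith) hσ1 hΨ2 hΨ2g
    (c := fun i => (∏ k ∈ Finset.range i, (μ - (k : K0))) / (Nat.factorial i : K0))
    (by simp) hchoose hΨ1
  have hρm : MemPow v2 b2 ρ := Or.inr hρ.ge
  have hpsi : (Ψ1 ^ p) ρ - Ψ2 ρ = 0 ∨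
      P ^ 2 * e0 + P * b1 - (P - 1) * b2 ≤ v2 ((Ψ1 ^ p) ρ - Ψ2 ρ) :=
    MemPow.mono (hdiff _ _ hρm) (by linarith)
  refine ⟨?_, hpsi, fun r s hr hs => ?_⟩
  · simpa [hΨ2] using hpsi
  · have hr' : (r : ℤ) + 1 ≤ P := by
      have := hp.two_le
      omega
    have hop : Ψ1 ^ (p + r) * Ψ2 ^ s - Ψ1 ^ r * Ψ2 ^ (s + 1)
        = Ψ1 ^ r * (Ψ1 ^ p - Ψ2) * Ψ2 ^ s := by
      rw [add_comm p r, pow_add, pow_succ', mul_sub, sub_mul]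
      simp only [mul_assoc]
    have hfinal := (((hΨ1g.pow r).mul hdiff).mul (hΨ2g.pow s)) _ _ hρm
    rw [← hop, LinearMap.sub_apply] at hfinal
    refine MemPow.mono hfinal ?_
    have := mul_nonneg (by linarith : 0 ≤ P - (r + 1)) (by linarith : 0 ≤ P * b1)
    linarith
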